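/- The quartic surface X_Mukai = {f₀ = 0} ⊂ ℙ³(ℂ) is smooth: for every point p ∈ ℂ⁴, if all four partial derivatives ∂f₀/∂x, ∂f₀/∂y, ∂f₀/∂z, ∂f₀/∂t vanish at p, then p = 0. (Hence X_Mukai is a K3 surface.) -/

import Mathlib

open MvPolynomial

/-- Mukai's quartic `f₀ = Σ x⁴ − 6 Σ x²y²` in `ℂ[x,y,z,t]`. -/
noncomputable def f0 : MvPolynomial (Fin 4) ℂ :=
  X 0 ^ 4 + X 1 ^ 4 + X 2 ^ 4 + X 3 ^ 4 -
    6 * (X 0 ^ 2 * X 1 ^ 2 + X 0 ^ 2 * X 2 ^ 2 + X 0 ^ 2 * X 3 ^ 2 +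
         X 1 ^ 2 * X 2 ^ 2 + X 1 ^ 2 * X 3 ^ 2 + X 2 ^ 2 * X 3 ^ 2)

/-- The quartic surface `X_Mukai = {f₀ = 0} ⊂ ℙ³(ℂ)` is smooth: if all four
partial derivatives of `f₀` vanish at `p ∈ ℂ⁴`, then `p = 0`. -/
theorem stmt_15 :
    ∀ p : Fin 4 → ℂ, (∀ j : Fin 4, eval p (pderiv j f0) = 0) → p = 0 := by
  intro p h
  have h0 := h 0
  have h1 := h 1
  have h2 := h 2
  have h3 := h 3
  have c6 : (6 : MvPolynomial (Fin 4) ℂ) = C 6 := (map_ofNat C 6).symm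
  simp [f0, c6, pderiv_X, Derivation.leibniz, Derivation.leibniz_pow] at h0 h1 h2 h3
  have key : ∀ a S : ℂ, a * (4 * a ^ 2 - 3 * S) = 0 → a ^ 2 = 0 ∨ a ^ 2 = 3 / 4 * S := by
    intro a S e
    rcases mul_eq_zero.1 e with e | e
    · left; simp [e]
    · right; linear_combination e / 4
  obtain ⟨S, hS⟩ : ∃ S, S = p 0 ^ 2 + p 1 ^ 2 + p 2 ^ 2 + p 3 ^ 2 := ⟨_, rfl⟩
  have k0 := key (p 0) S (by rw [hS]; linear_combination h0 / 4)
  have k1 := key (p 1) S (by rw [hS]; linear_combination h1 / 4)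
  have k2 := key (p 2) S (by rw [hS]; linear_combination h2 / 4)
  have k3 := key (p 3) S (by rw [hS]; linear_combination h3 / 4)
  have S0 : S = 0 := by
    rcases k0 with k0 | k0 <;> rcases k1 with k1 | k1 <;> rcases k2 with k2 | k2 <;>
      rcases k3 with k3 | k3 <;> rw [k0, k1, k2, k3] at hS <;> grind
  subst S0
  funext j
  fin_cases j
  · simpa using k0
  · simpa using k1
  · simpa using k2
  · simpa using k3
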